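/- arXiv:2006.02880 — 6 statements merged into one kernel-verified Lean document; each statement's English description precedes it below -/
import Mathlib

section
/- If X is an infinite scattered T₀-space, then w(X) ≥ |X|. -/
open Cardinal Set

universe u

/-- The weight of a topological space: the least cardinality of a basis for its topology. -/
noncomputable def tweight (X : Type u) [TopologicalSpace X] : Cardinal.{u} :=
  sInf { c : Cardinal.{u} | ∃ B : Set (Set X), TopologicalSpace.IsTopologicalBasis B ∧ #B = c }

/-- A space is scattered if every nonempty subset has a point isolated in that subset. -/
def Scattered (X : Type u) [TopologicalSpace X] : Prop :=
  ∀ S : Set X, S.Nonempty → ∃ x ∈ S, ∃ U : Set X, IsOpen U ∧ U ∩ S = {x}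

/-!
Remove the isolated points of `X`, then the isolated points of what is left, and so on through the
ordinals, until only the perfect kernel remains. Every point `x` outside the kernel is isolated in
the last stage `L x` containing it, so a given basis has a member `b x` with `b x ∩ L x = {x}`. The
stages decrease, so of two such points `x`, `y` one lies in the stage of the other, say `y ∈ L x`;
then `b x = b y` forces `y ∈ b x ∩ L x = {x}`. Hence `b` is injective, and in a scattered space the
kernel is empty.
-/

open TopologicalSpace OrdinalApprox
open scoped Topology

section Weight

variable {X : Type u} [TopologicalSpace X]

theorem exists_isTopologicalBasis_mk_eq_tweight (X : Type u) [TopologicalSpace X] :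
    ∃ B : Set (Set X), IsTopologicalBasis B ∧ #B = tweight X :=
  csInf_mem (s := {c | ∃ B : Set (Set X), IsTopologicalBasis B ∧ #B = c})
    ⟨_, _, isTopologicalBasis_opens, rfl⟩

theorem mk_le_mk_of_isTopologicalBasis_of_eventually_eq {S : Set X} {B : Set (Set X)}
    (hB : IsTopologicalBasis B) (r : X → X → Prop) (hr : ∀ x ∈ S, ∀ y ∈ S, r x y ∨ r y x)
    (hS : ∀ x ∈ S, ∀ᶠ y in 𝓝 x, r x y → y = x) : #S ≤ #B := by
  choose! b hbB hxb hb using fun x hx ↦ hB.mem_nhds_iff.mp (hS x hx)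
  have eq_of_rel {x y : X} (hx : x ∈ S) (hy : y ∈ S) (hxy : b x = b y) (h : r x y) : y = x :=
    hb x hx (hxy ▸ hxb y hy) h
  refine mk_le_of_injective (f := fun x : S ↦ (⟨b x, hbB x x.2⟩ : B)) fun x y hxy ↦ ?_
  replace hxy : b x = b y := congrArg Subtype.val hxy
  exact Subtype.ext <| (hr x x.2 y y.2).elim
    (fun h ↦ (eq_of_rel x.2 y.2 hxy h).symm) (eq_of_rel y.2 x.2 hxy.symm)

end Weight

section CantorBendixson

variable {X : Type u} [TopologicalSpace X]

theorem notMem_derivedSet_iff_eventually {S : Set X} {x : X} :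
    x ∉ derivedSet S ↔ ∀ᶠ y in 𝓝 x, y ∈ S → y = x := by
  simp only [mem_derivedSet, accPt_iff_frequently, Filter.not_frequently, not_and', not_ne_iff]

/-- The perfect kernel of a space: its largest subset without isolated points, encoded as the
greatest fixed point of the relative derived set operator. -/
def perfectKernel (X : Type u) [TopologicalSpace X] : Set X :=
  (relDerivedSet (X := X)).gfp

/-- The Cantor–Bendixson derivative of order `a` of a space: what remains after `a` rounds of
removing all isolated points, with intersections taken at limit ordinals. -/
noncomputable def cantorBendixson (X : Type u) [TopologicalSpace X] (a : Ordinal.{u}) : Set X :=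
  gfpApprox relDerivedSet ⊤ a

theorem cantorBendixson_antitone : Antitone (cantorBendixson X) :=
  gfpApprox_anti_right _

theorem mem_cantorBendixson_iff {a : Ordinal.{u}} {x : X} :
    x ∈ cantorBendixson X a ↔ ∀ b < a, x ∈ relDerivedSet (cantorBendixson X b) := by
  rw [cantorBendixson, gfpApprox]
  simp only [top_inf_eq, iInf_eq_iInter, mem_iInter, cantorBendixson]

theorem exists_cantorBendixson_eq_perfectKernel (X : Type u) [TopologicalSpace X] :
    ∃ a, cantorBendixson X a = perfectKernel X :=
  gfp_mem_range_gfpApprox _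

theorem exists_mem_cantorBendixson_notMem_derivedSet {x : X} (hx : x ∉ perfectKernel X) :
    ∃ a, x ∈ cantorBendixson X a ∧ x ∉ derivedSet (cantorBendixson X a) := by
  by_contra! h
  have mem_all (a : Ordinal.{u}) : x ∈ cantorBendixson X a := by
    induction a using WellFoundedLT.induction with
    | ind a ih => exact mem_cantorBendixson_iff.mpr fun b hb ↦ ⟨h b (ih b hb), ih b hb⟩
  obtain ⟨a, ha⟩ := exists_cantorBendixson_eq_perfectKernel X
  exact hx (ha ▸ mem_all a)

theorem preperfect_perfectKernel (X : Type u) [TopologicalSpace X] :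
    Preperfect (perfectKernel X) :=
  preperfect_iff_eq_relDerivedSet.mpr relDerivedSet.map_gfp.symm

theorem Scattered.eq_empty_of_preperfect (hX : Scattered X) {S : Set X} (hS : Preperfect S) :
    S = ∅ := by
  by_contra hne
  obtain ⟨x, hxS, U, hU, hUS⟩ := hX S (nonempty_iff_ne_empty.mpr hne)
  have hxU : x ∈ U := (hUS.ge rfl).1
  refine notMem_derivedSet_iff_eventually.mpr ?_ (hS x hxS)
  filter_upwards [hU.mem_nhds hxU] with y hyU hyS
  exact hUS.le ⟨hyU, hyS⟩

end CantorBendixson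

theorem stmt1_general (X : Type u) [TopologicalSpace X] : #↥(perfectKernel X)ᶜ ≤ tweight X := by
  obtain ⟨B, hB, hBX⟩ := exists_isTopologicalBasis_mk_eq_tweight X
  choose! rank mem_stage notMem_derivedSet using
    fun x : X ↦ exists_mem_cantorBendixson_notMem_derivedSet (x := x)
  rw [← hBX]
  refine mk_le_mk_of_isTopologicalBasis_of_eventually_eq hB
    (fun x y ↦ y ∈ cantorBendixson X (rank x)) (fun x hx y hy ↦ ?_)
    fun x hx ↦ notMem_derivedSet_iff_eventually.mp (notMem_derivedSet x hx)
  exact (le_total (rank x) (rank y)).imp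
    (fun h ↦ cantorBendixson_antitone h (mem_stage y hy))
    (fun h ↦ cantorBendixson_antitone h (mem_stage x hx))

/-- If `X` is an infinite scattered T₀-space, then `w(X) ≥ |X|`. -/
theorem stmt1 (X : Type u) [TopologicalSpace X] [T0Space X] [Infinite X]
    (hX : Scattered X) : #X ≤ tweight X := by
  have hK : perfectKernel X = ∅ := hX.eq_empty_of_preperfect (preperfect_perfectKernel X)
  simpa only [hK, compl_empty, mk_univ] using stmt1_general X
end

section
/- If Z is a regular topological space and z ∈ Z is such that the subspace Z \ {z} is paracompact, then Z is paracompact. -/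
open Set

universe u

/-!
The point may be replaced by any compact set `K`. Finitely many members of an open cover contain
`K` in their union, which by regularity also contains the closure of an open set `V ⊇ K`. The
closed set `Vᶜ` inherits paracompactness from `Kᶜ`, and a family that is locally finite in `Vᶜ` is
locally finite in the whole space. So a locally finite refinement over `Vᶜ`, cut down to the
interior of `Vᶜ`, completes the finite subfamily to a locally finite refinement of the cover.
-/

open Topology

section

variable {ι X Y : Type*} [TopologicalSpace X] [TopologicalSpace Y]

theorem locallyFinite_image_of_isClosedEmbedding {e : X → Y} {f : ι → Set X}
    (he : IsClosedEmbedding e) (hf : LocallyFinite f) : LocallyFinite fun i ↦ e '' f i := by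
  intro y
  by_cases hy : y ∈ range e
  · obtain ⟨x, rfl⟩ := hy
    obtain ⟨N, hN, hNf⟩ := hf x
    obtain ⟨M, hM, hMN⟩ := (he.isInducing.nhds_eq_comap x ▸ hN : N ∈ (𝓝 (e x)).comap e)
    refine ⟨M, hM, hNf.subset fun i hi ↦ ?_⟩
    exact (image_inter_nonempty_iff.1 hi).mono (inter_subset_inter_right _ hMN)
  · refine ⟨(range e)ᶜ, he.isClosed_range.compl_mem_nhds hy, finite_empty.subset fun i hi ↦ ?_⟩
    obtain ⟨_, hi, hi'⟩ := hi
    exact hi' (image_subset_range e _ hi)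

theorem paracompactSpace_of_isClosed_of_subset {F S : Set X} [ParacompactSpace S]
    (hF : IsClosed F) (hFS : F ⊆ S) : ParacompactSpace F :=
  (IsClosedEmbedding.inclusion hFS hF.preimage_val).paracompactSpace

theorem exists_locallyFinite_refinement_interior {F : Set X} [ParacompactSpace F]
    (hF : IsClosed F) (s : ι → Set X) (hso : ∀ i, IsOpen (s i)) (hFs : F ⊆ ⋃ i, s i) :
    ∃ t : ι → Set X, (∀ i, IsOpen (t i)) ∧ interior F ⊆ ⋃ i, t i ∧ LocallyFinite t ∧
      ∀ i, t i ⊆ s i := by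
  have hcover : ⋃ i, ((↑) ⁻¹' s i : Set F) = univ := by
    rw [← preimage_iUnion, eq_univ_iff_forall]
    exact fun x ↦ hFs x.2
  obtain ⟨v, hvo, hvc, hvf, hvs⟩ :=
    precise_refinement _ (fun i ↦ (hso i).preimage continuous_subtype_val) hcover
  choose O hO hOv using fun i ↦ isOpen_induced_iff.1 (hvo i)
  obtain rfl : v = fun i ↦ (↑) ⁻¹' O i := funext fun i ↦ (hOv i).symm
  refine ⟨fun i ↦ O i ∩ interior F, fun i ↦ (hO i).inter isOpen_interior, fun x hx ↦ ?_, ?_, ?_⟩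
  · obtain ⟨i, hi⟩ := iUnion_eq_univ_iff.1 hvc ⟨x, interior_subset hx⟩
    exact mem_iUnion.2 ⟨i, hi, hx⟩
  · refine (locallyFinite_image_of_isClosedEmbedding hF.isClosedEmbedding_subtypeVal hvf).subset ?_
    exact fun i x ⟨hxO, hxF⟩ ↦ ⟨⟨x, interior_subset hxF⟩, hxO, rfl⟩
  · exact fun i x ⟨hxO, hxF⟩ ↦ hvs i (show ⟨x, interior_subset hxF⟩ ∈ _ from hxO)

end

theorem stmt3_general {Z : Type*} [TopologicalSpace Z] [RegularSpace Z] {K : Set Z}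
    (hK : IsCompact K) [ParacompactSpace ↥Kᶜ] : ParacompactSpace Z := by
  refine ⟨fun ι s hso hsc ↦ ?_⟩
  obtain ⟨T, hKT⟩ := hK.elim_finite_subcover s hso (hsc ▸ subset_univ K)
  have hT : ⋃ i ∈ T, s i ∈ 𝓝ˢ K := (isOpen_biUnion fun i _ ↦ hso i).mem_nhdsSet.2 hKT
  obtain ⟨V, hVo, hKV, hVT⟩ := hK.exists_isOpen_closure_subset hT
  have : ParacompactSpace ↥Vᶜ :=
    paracompactSpace_of_isClosed_of_subset hVo.isClosed_compl (compl_subset_compl.2 hKV)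
  obtain ⟨t, hto, htc, htf, hts⟩ :=
    exists_locallyFinite_refinement_interior hVo.isClosed_compl s hso (hsc ▸ subset_univ Vᶜ)
  rw [interior_compl] at htc
  have hcover : ⋃ j, Sum.elim (fun i : T ↦ s i) t j = univ := by
    rw [iUnion_sum, ← univ_subset_iff, ← union_compl_self (closure V)]
    exact union_subset_union (hVT.trans (iUnion_subtype (· ∈ T) (s ·)).ge) htc
  exact ⟨T ⊕ ι, Sum.elim (fun i ↦ s i) t, Sum.forall.2 ⟨fun i ↦ hso i, hto⟩, hcover,
    (locallyFinite_of_finite _).sumElim htf,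
    Sum.forall.2 ⟨fun i ↦ ⟨i, Subset.rfl⟩, fun i ↦ ⟨i, hts i⟩⟩⟩

/-- If `Z` is a regular space such that `Z \ {z}` is paracompact for some `z ∈ Z`,
then `Z` is paracompact. -/
theorem stmt3 (Z : Type u) [TopologicalSpace Z] [RegularSpace Z] (z : Z)
    (hz : ParacompactSpace ({z}ᶜ : Set Z)) : ParacompactSpace Z :=
  stmt3_general (isCompact_singleton (x := z))
end

section
/- Let Y be an infinite set, z ∉ Y, X = Y ∪ {z}, and let F be a filter on Y (a filter of subsets of Y not containing ∅). Equip X with the single filter topology τ[F]: a set U ⊆ X is open if and only if either z ∉ U, or U = {z} ∪ F for some F ∈ F. Then the space (X, τ[F]) is almost discrete and perfectly normal if and only if F is ω-free. -/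
open Cardinal Set

universe u

/-- The single filter topology `τ[F]` on `X = Y ∪ {z}` (realized as `Option Y`, with
`z = none`): a set `U` is open iff either `z ∉ U`, or `U = {z} ∪ F` for some `F ∈ F`,
i.e. iff `z ∈ U` implies that the trace of `U` on `Y` belongs to the filter `F`. -/
def singleFilterTopology {Y : Type u} (F : Filter Y) : TopologicalSpace (Option Y) where
  IsOpen U := none ∈ U → {y : Y | some y ∈ U} ∈ F
  isOpen_univ := fun _ => by simp [Filter.univ_mem]
  isOpen_inter := fun U V hU hV h => by
    have := Filter.inter_mem (hU h.1) (hV h.2)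
    simpa [Set.setOf_and] using this
  isOpen_sUnion := fun S hS h => by
    obtain ⟨U, hUS, hU⟩ := h
    exact Filter.mem_of_superset (hS U hUS hU) fun y hy => ⟨U, hUS, hy⟩

/-- A filter is ω-free iff some countable subfamily has empty intersection. -/
def OmegaFree {Y : Type u} (F : Filter Y) : Prop :=
  ∃ A : Set (Set Y), A.Countable ∧ A ⊆ F.sets ∧ ⋂₀ A = ∅

/-- A Hausdorff space is almost discrete iff the complement of some point is discrete. -/
def AlmostDiscrete (X : Type u) [TopologicalSpace X] : Prop :=
  T2Space X ∧ ∃ x : X, DiscreteTopology ({x}ᶜ : Set X)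

/-- A space is perfectly normal iff it is normal and every closed set is a Gδ-set. -/
def PerfectlyNormal (X : Type u) [TopologicalSpace X] : Prop :=
  NormalSpace X ∧ ∀ C : Set X, IsClosed C → IsGδ C

/-!
In `τ[F]` every point other than `z` is isolated. In any space whose points other than `x` are all
isolated, normality is automatic, and as soon as `{x}` is a Gδ-set the space is Hausdorff and every
subset is Gδ; so both properties together amount to `{x}` being a Gδ-set. For `τ[F]` the open
neighbourhoods of `z` are the sets `{z} ∪ A` with `A ∈ F`, so a countable family of them with
intersection `{z}` is a countable subfamily of `F` with empty intersection.
-/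

section IsolatedPoints

variable {X : Type u} [TopologicalSpace X] {x : X}

theorem isOpen_of_notMem_of_isOpen_singleton (hx : ∀ y ≠ x, IsOpen {y}) {U : Set X} (hU : x ∉ U) :
    IsOpen U := by
  rw [← biUnion_of_singleton U]
  exact isOpen_biUnion fun y hy => hx y (ne_of_mem_of_not_mem hy hU)

theorem discreteTopology_compl_singleton (hx : ∀ y ≠ x, IsOpen {y}) :
    DiscreteTopology ({x}ᶜ : Set X) :=
  discreteTopology_subtype_iff'.2 fun y hy =>
    ⟨{y}, hx y hy, inter_eq_left.2 (singleton_subset_iff.2 hy)⟩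

theorem separatedNhds_of_isClosed_of_notMem (hx : ∀ y ≠ x, IsOpen {y}) {s t : Set X}
    (hs : IsClosed s) (hst : Disjoint s t) (hxs : x ∉ s) : SeparatedNhds s t :=
  ⟨s, sᶜ, isOpen_of_notMem_of_isOpen_singleton hx hxs, hs.isOpen_compl, Subset.rfl,
    hst.subset_compl_left, disjoint_compl_right⟩

theorem normalSpace_of_isOpen_singleton (hx : ∀ y ≠ x, IsOpen {y}) : NormalSpace X where
  normal s t hs ht hst := by
    by_cases hxs : x ∈ s
    · have hxt : x ∉ t := disjoint_left.1 hst hxs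
      exact (separatedNhds_of_isClosed_of_notMem hx ht hst.symm hxt).symm
    · exact separatedNhds_of_isClosed_of_notMem hx hs hst hxs

theorem t1Space_of_isGδ_singleton (hx : ∀ y ≠ x, IsOpen {y}) (hG : IsGδ {x}) : T1Space X := by
  obtain ⟨T, hTo, -, hxT⟩ := hG
  refine t1Space_iff_exists_open.2 fun a b hab => ?_
  rcases eq_or_ne a x with rfl | hax
  · have hb : b ∉ ⋂₀ T := hxT ▸ hab.symm
    obtain ⟨U, hUT, hbU⟩ : ∃ U ∈ T, b ∉ U := by
      simpa only [mem_sInter, not_forall, exists_prop] using hb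
    have ha : a ∈ ⋂₀ T := hxT ▸ mem_singleton a
    exact ⟨U, hTo U hUT, ha U hUT, hbU⟩
  · exact ⟨{a}, hx a hax, mem_singleton a, hab.symm⟩

theorem isGδ_of_isGδ_singleton (hx : ∀ y ≠ x, IsOpen {y}) (hG : IsGδ {x}) (s : Set X) :
    IsGδ s := by
  have hdiff : IsGδ (s \ {x}) :=
    (isOpen_of_notMem_of_isOpen_singleton hx (notMem_sdiff_of_mem (mem_singleton x))).isGδ
  by_cases hxs : x ∈ s
  · rw [← sdiff_union_of_subset (singleton_subset_iff.2 hxs)]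
    exact hdiff.union hG
  · rwa [sdiff_singleton_eq_self hxs] at hdiff

theorem almostDiscrete_and_perfectlyNormal_iff_isGδ_singleton (hx : ∀ y ≠ x, IsOpen {y}) :
    AlmostDiscrete X ∧ PerfectlyNormal X ↔ IsGδ {x} := by
  constructor
  · rintro ⟨-, -, hclosed⟩
    exact hclosed {x} ⟨isOpen_of_notMem_of_isOpen_singleton hx (notMem_compl_iff.2 rfl)⟩
  · intro hG
    have : T1Space X := t1Space_of_isGδ_singleton hx hG
    have : NormalSpace X := normalSpace_of_isOpen_singleton hx
    exact ⟨⟨inferInstance, x, discreteTopology_compl_singleton hx⟩, this,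
      fun C _ => isGδ_of_isGδ_singleton hx hG C⟩

end IsolatedPoints

namespace singleFilterTopology

open scoped Topology

variable {Y : Type u} (F : Filter Y)

theorem isOpen_iff {U : Set (Option Y)} :
    IsOpen[singleFilterTopology F] U ↔ (none ∈ U → some ⁻¹' U ∈ F) :=
  Iff.rfl

theorem isOpen_singleton_of_ne_none (y : Option Y) (hy : y ≠ none) :
    IsOpen[singleFilterTopology F] {y} :=
  (isOpen_iff F).2 fun h => absurd h.symm hy

theorem isOpen_insert_none_image_some {a : Set Y} (ha : a ∈ F) :
    IsOpen[singleFilterTopology F] (insert none (some '' a)) :=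
  (isOpen_iff F).2 fun _ =>
    Filter.mem_of_superset ha fun _ hy => mem_insert_of_mem _ (mem_image_of_mem some hy)

theorem isGδ_singleton_none_iff_omegaFree :
    letI : TopologicalSpace (Option Y) := singleFilterTopology F
    IsGδ {(none : Option Y)} ↔ OmegaFree F := by
  let : TopologicalSpace (Option Y) := singleFilterTopology F
  constructor
  · rintro ⟨T, hTo, hTc, hT⟩
    have hnone : none ∈ ⋂₀ T := hT ▸ mem_singleton none
    refine ⟨(some ⁻¹' ·) '' T, hTc.image _, ?_, ?_⟩
    · rintro _ ⟨U, hUT, rfl⟩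
      exact (isOpen_iff F).1 (hTo U hUT) (hnone U hUT)
    · rw [sInter_image, ← preimage_sInter, ← hT]
      exact eq_empty_of_forall_notMem fun y => Option.some_ne_none y
  · rintro ⟨A, hAc, hAF, hA⟩
    have hnone : {none} = ⋂ a ∈ A, insert none (some '' a) := by
      ext y
      cases y with
      | none => simp
      | some y => simpa using Set.ext_iff.1 hA y
    rw [hnone]
    exact IsGδ.biInter hAc fun a ha => (isOpen_insert_none_image_some F (hAF ha)).isGδ

end singleFilterTopology

/-- Let `Y` be an infinite set and let `F` be a (proper) filter on `Y`.  The space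
`(Y ∪ {z}, τ[F])` is almost discrete and perfectly normal iff `F` is ω-free. -/
theorem stmt5 (Y : Type u) [Infinite Y] (F : Filter Y) [F.NeBot] :
    letI : TopologicalSpace (Option Y) := singleFilterTopology F
    (AlmostDiscrete (Option Y) ∧ PerfectlyNormal (Option Y)) ↔ OmegaFree F := by
  let : TopologicalSpace (Option Y) := singleFilterTopology F
  exact (almostDiscrete_and_perfectlyNormal_iff_isGδ_singleton
    (singleFilterTopology.isOpen_singleton_of_ne_none F)).trans
    (singleFilterTopology.isGδ_singleton_none_iff_omegaFree F)
end

section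
/- Let Y be an infinite set, z ∉ Y, X = Y ∪ {z}, and let F be a free filter on Y (a filter of subsets of Y not containing ∅ and with ⋂F = ∅). Equip X with the single filter topology τ[F]: a set U ⊆ X is open if and only if either z ∉ U, or U = {z} ∪ F for some F ∈ F. Then the space (X, τ[F]) is extremally disconnected if and only if F is an ultrafilter. -/
open Cardinal Set

universe u

/-!
If every point other than `a` is isolated, the only open sets whose closure can fail to be open
are the open `U` with `a ∉ U` and `a ∈ closure U`; then `closure U = insert a U`, which is open iff
`U ∈ 𝓝[≠] a`, while `a ∉ closure U` means `Uᶜ ∈ 𝓝[≠] a`. So extremal disconnectedness says that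
`𝓝[≠] a` decides every set, and in `τ[F]` the filter `𝓝[≠] z` is `F` itself.
-/

open Filter Topology

section IsolatedOffPoint

variable {X : Type*} [TopologicalSpace X] {a : X} {s : Set X}

theorem isOpen_iff_mem_nhds_of_isOpen_singleton (hiso : ∀ b ≠ a, IsOpen {b}) :
    IsOpen s ↔ (a ∈ s → s ∈ 𝓝 a) := by
  refine ⟨IsOpen.mem_nhds, fun h ↦ isOpen_iff_mem_nhds.2 fun b hb ↦ ?_⟩
  obtain rfl | hne := eq_or_ne b a
  · exact h hb
  · exact mem_of_superset ((hiso b hne).mem_nhds rfl) (singleton_subset_iff.2 hb)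

theorem isOpen_of_notMem_of_isOpen_singleton_s6 (hiso : ∀ b ≠ a, IsOpen {b}) (ha : a ∉ s) :
    IsOpen s :=
  (isOpen_iff_mem_nhds_of_isOpen_singleton hiso).2 fun h ↦ absurd h ha

theorem closure_subset_insert_of_isOpen_singleton (hiso : ∀ b ≠ a, IsOpen {b}) :
    closure s ⊆ insert a s :=
  closure_minimal (subset_insert a s)
    ⟨isOpen_of_notMem_of_isOpen_singleton_s6 hiso fun h ↦ h (mem_insert a s)⟩

theorem notMem_closure_iff_compl_mem_nhdsNE (ha : a ∉ s) :
    a ∉ closure s ↔ sᶜ ∈ 𝓝[≠] a := by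
  rw [← insert_mem_nhds_iff, insert_eq_of_mem (mem_compl ha), ← mem_interior_iff_mem_nhds,
    interior_compl, mem_compl_iff]

theorem isOpen_closure_iff_mem_nhdsNE (hiso : ∀ b ≠ a, IsOpen {b}) (hs : IsOpen s) :
    IsOpen (closure s) ↔ s ∈ 𝓝[≠] a ∨ sᶜ ∈ 𝓝[≠] a := by
  rw [isOpen_iff_mem_nhds_of_isOpen_singleton hiso]
  by_cases ha : a ∈ s
  · have hnhds : s ∈ 𝓝 a := hs.mem_nhds ha
    exact iff_of_true (fun _ ↦ mem_of_superset hnhds subset_closure)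
      (.inl (mem_nhdsWithin_of_mem_nhds hnhds))
  · rw [← notMem_closure_iff_compl_mem_nhdsNE ha, or_comm, ← imp_iff_not_or]
    refine imp_congr_right fun hcl ↦ ?_
    have hclosure : closure s = insert a s :=
      (closure_subset_insert_of_isOpen_singleton hiso).antisymm (insert_subset hcl subset_closure)
    rw [hclosure, insert_mem_nhds_iff]

theorem extremallyDisconnected_iff_mem_or_compl_mem_nhdsNE (hiso : ∀ b ≠ a, IsOpen {b}) :
    ExtremallyDisconnected X ↔ ∀ s : Set X, s ∈ 𝓝[≠] a ∨ sᶜ ∈ 𝓝[≠] a := by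
  refine ⟨fun h s ↦ ?_, fun h ↦ ⟨fun U hU ↦ (isOpen_closure_iff_mem_nhdsNE hiso hU).2 (h U)⟩⟩
  -- `s` need not be open, but `s \ {a}` is, and `𝓝[≠] a` does not see the difference.
  have hopen : IsOpen (s \ {a}) := isOpen_of_notMem_of_isOpen_singleton_s6 hiso fun ha ↦ ha.2 rfl
  refine ((isOpen_closure_iff_mem_nhdsNE hiso hopen).1 (h.open_closure _ hopen)).imp
    (mem_of_superset · sdiff_subset) fun hcompl ↦ ?_
  filter_upwards [hcompl, self_mem_nhdsWithin] with b hb hba hbs using hb ⟨hbs, hba⟩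

end IsolatedOffPoint

theorem nhdsNE_nhdsAdjoint {X : Type*} (a : X) (l : Filter X) :
    letI := nhdsAdjoint a l
    𝓝[≠] a = l ⊓ 𝓟 {a}ᶜ := by
  let _ := nhdsAdjoint a l
  have hpure : pure a ⊓ 𝓟 {a}ᶜ = ⊥ := by
    rw [← principal_singleton, inf_principal, inter_compl_self, principal_empty]
  rw [nhdsWithin, nhds_nhdsAdjoint_same, inf_sup_right, hpure, bot_sup_eq]

section SingleFilterTopology

variable {Y : Type*} (F : Filter Y)

theorem singleFilterTopology_eq_nhdsAdjoint :
    singleFilterTopology F = nhdsAdjoint none (F.map some) :=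
  rfl

theorem nhdsNE_none_singleFilterTopology :
    letI := singleFilterTopology F
    𝓝[≠] (none : Option Y) = F.map some := by
  rw [singleFilterTopology_eq_nhdsAdjoint, nhdsNE_nhdsAdjoint, inf_eq_left, le_principal_iff]
  exact mem_map.2 (univ_mem' Option.some_ne_none)

theorem stmt6_general :
    letI := singleFilterTopology F
    ExtremallyDisconnected (Option Y) ↔ ∀ A : Set Y, A ∈ F ∨ Aᶜ ∈ F := by
  let _ := singleFilterTopology F
  have hiso : ∀ b ≠ (none : Option Y), IsOpen {b} := fun _ ↦
    isOpen_singleton_nhdsAdjoint (F.map some)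
  rw [extremallyDisconnected_iff_mem_or_compl_mem_nhdsNE hiso, nhdsNE_none_singleFilterTopology]
  simp only [mem_map, preimage_compl]
  exact ((preimage_surjective.2 (Option.some_injective Y)).forall
    (p := fun A ↦ A ∈ F ∨ Aᶜ ∈ F)).symm

end SingleFilterTopology

/-- Let `Y` be an infinite set and let `F` be a free (proper) filter on `Y`, i.e. with
`⋂ F = ∅`.  The space `(Y ∪ {z}, τ[F])` is extremally disconnected iff `F` is an
ultrafilter, i.e. iff for every `A ⊆ Y` either `A ∈ F` or `Y \ A ∈ F`. -/
theorem stmt6 (Y : Type u) [Infinite Y] (F : Filter Y) [F.NeBot]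
    (hfree : ⋂₀ F.sets = ∅) :
    letI : TopologicalSpace (Option Y) := singleFilterTopology F
    ExtremallyDisconnected (Option Y) ↔ ∀ A : Set Y, A ∈ F ∨ Aᶜ ∈ F :=
  stmt6_general F
end

section
/- Let μ be an infinite cardinal and let Y be an infinite set of cardinality κ with κ^{<μ} = κ. Then there exists a family A of subsets of Y such that |A| = 2^κ, A has a subfamily K of cardinality μ with ⋂K = ∅, and whenever D and E are disjoint nonempty subfamilies of A each of cardinality smaller than μ, the set ⋂D is not a subset of ⋃E. -/
/-!
Call a family of sets `μ`-independent if any fewer than `μ` members have a common point outside any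
fewer than `μ` other members. Let `P` be the collection of pairs `(s, F)` where `s` is a subset of
`Y` with `#s < μ` and `F` is a collection of fewer than `μ` such subsets; as `κ ^< μ = κ`, there
are `κ` such pairs. To `X ⊆ Y` attach the set of those `(s, F)` with `X ∩ s ∈ F`. This family of
`2 ^ κ` sets is `μ`-independent: given disjoint `d` and `e`, take for `s` a set on which no member
of `d` agrees with a member of `e`, and for `F` the traces on `s` of the members of `d`. A
surjection `Y → P` carries the family over to `Y`.

To obtain `K`, fix `μ` members and remove their intersection from every set of the family.
Independence survives: when separating `d` from `e`, add to `e` one of the fixed members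
outside `d`.
-/

open Cardinal Set

universe u v w

section SmallSubsets

variable {α : Type u} {κ μ : Cardinal.{u}}

theorem le_powerlt_of_one_lt (hκ : 1 < κ) : μ ≤ κ ^< μ :=
  le_of_forall_lt fun c hc => (cantor' c hκ).trans_le (le_powerlt κ hc)

theorem mk_subsets_lt_le_powerlt (α : Type u) [Infinite α] (hμ : 1 < μ) :
    #{s : Set α // #s < μ} ≤ #α ^< μ := by
  have hinfinite : ℵ₀ ≤ #α ^< μ := (aleph0_le_mk α).trans (by simpa using le_powerlt #α hμ)
  have hcover : {s : Set α | #s < μ} ⊆ ⋃ o < μ.ord, {s : Set α | #s ≤ o.card} := fun s hs =>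
    mem_iUnion₂.2 ⟨(#s).ord, ord_lt_ord.2 hs, (card_ord #s).ge⟩
  have hcard : μ.ord.card ≤ #α ^< μ := by
    simpa using le_powerlt_of_one_lt (one_lt_aleph0.trans_le (aleph0_le_mk α))
  refine (mk_le_mk_of_subset hcover).trans (mk_biUnion_le_of_le hcard hinfinite _ fun o ho => ?_)
  exact (mk_bounded_set_le_of_infinite α o.card).trans (le_powerlt _ (lt_ord.1 ho))

theorem mk_subsets_lt_eq [Infinite α] (hμ : 1 < μ) (hpow : #α ^< μ = #α) :
    #{s : Set α // #s < μ} = #α := by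
  refine ((mk_subsets_lt_le_powerlt α hμ).trans hpow.le).antisymm ?_
  exact mk_le_of_injective (f := fun a => ⟨{a}, by simpa using hμ⟩) fun a b h => by simpa using h

end SmallSubsets

/-- The indexed family `B` of subsets of `α` is `μ`-independent: any fewer than `μ` of its members
have a common point lying outside any fewer than `μ` other members. Disjointness refers to the
indices, and the two sets of indices may be empty. -/
def IsIndependentFamily {ι : Type u} {α : Type v} (μ : Cardinal.{u}) (B : ι → Set α) : Prop :=
  ∀ d e : Set ι, Disjoint d e → #d < μ → #e < μ → ∃ a, (∀ i ∈ d, a ∈ B i) ∧ ∀ i ∈ e, a ∉ B i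

namespace IsIndependentFamily

variable {ι : Type u} {α : Type v} {μ : Cardinal.{u}} {B : ι → Set α}

theorem injective (hB : IsIndependentFamily μ B) (hμ : 1 < μ) : Function.Injective B := by
  intro i j hij
  by_contra hne
  obtain ⟨a, hai, haj⟩ :=
    hB {i} {j} (disjoint_singleton.2 hne) (by simpa using hμ) (by simpa using hμ)
  exact haj j rfl (hij ▸ hai i rfl)

theorem preimage {β : Type w} (hB : IsIndependentFamily μ B) {f : β → α}
    (hf : Function.Surjective f) : IsIndependentFamily μ fun i => f ⁻¹' B i := by
  intro d e hde hd he
  obtain ⟨a, ha⟩ := hB d e hde hd he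
  obtain ⟨b, rfl⟩ := hf a
  exact ⟨b, ha⟩

theorem diff_biInter (hB : IsIndependentFamily μ B) (hμ : ℵ₀ ≤ μ) {M : Set ι} (hM : μ ≤ #M) :
    IsIndependentFamily μ fun i => B i \ ⋂ j ∈ M, B j := by
  intro d e hde hd he
  obtain ⟨m, hmM, hmd⟩ := sdiff_nonempty_of_mk_lt_mk (hd.trans_le hM)
  have hinsert : #(insert m e : Set ι) < μ :=
    mk_insert_le.trans_lt (add_lt_of_lt hμ he (one_lt_aleph0.trans_le hμ))
  obtain ⟨a, had, hae⟩ := hB d (insert m e) (disjoint_insert_right.2 ⟨hmd, hde⟩) hd hinsert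
  have ha : a ∉ ⋂ j ∈ M, B j := fun h => hae m (mem_insert m e) (mem_iInter₂.1 h m hmM)
  exact ⟨a, fun i hi => ⟨had i hi, ha⟩, fun i hi h => hae i (mem_insert_of_mem m hi) h.1⟩

theorem not_sInter_subset_sUnion {α : Type u} {B : ι → Set α}
    (hB : IsIndependentFamily μ B) (hμ : 1 < μ) {D E : Set (Set α)} (hD : D ⊆ range B)
    (hE : E ⊆ range B) (hDE : Disjoint D E) (hDμ : #D < μ) (hEμ : #E < μ) :
    ¬ ⋂₀ D ⊆ ⋃₀ E := by
  have hinj := hB.injective hμ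
  obtain ⟨a, haD, haE⟩ := hB (B ⁻¹' D) (B ⁻¹' E) (hDE.preimage B)
    ((mk_preimage_of_injective B D hinj).trans_lt hDμ)
    ((mk_preimage_of_injective B E hinj).trans_lt hEμ)
  have ha : a ∈ ⋂₀ D := fun S hS => by
    obtain ⟨i, rfl⟩ := hD hS
    exact haD i hS
  intro hsub
  obtain ⟨S, hS, haS⟩ := hsub ha
  obtain ⟨i, rfl⟩ := hE hS
  exact haE i hS haS

end IsIndependentFamily

theorem biInter_diff_biInter_eq_empty {ι : Type u} {α : Type v} (B : ι → Set α) {M : Set ι}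
    (hM : M.Nonempty) : ⋂ i ∈ M, (B i \ ⋂ j ∈ M, B j) = ∅ := by
  obtain ⟨m, hm⟩ := hM
  refine eq_empty_of_forall_notMem fun a ha => ?_
  rw [mem_iInter₂] at ha
  exact (ha m hm).2 (mem_iInter₂.2 fun i hi => (ha i hi).1)

section TraceFamily

variable {α : Type u} {μ : Cardinal.{u}}

/-- The trace `X ∩ s` of a set `X` on a set `s` of cardinality less than `μ`, bundled with the
bound on its cardinality. -/
def smallTrace (X : Set α) (s : {s : Set α // #s < μ}) : {s : Set α // #s < μ} :=
  ⟨X ∩ s, (mk_le_mk_of_subset inter_subset_right).trans_lt s.2⟩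

/-- The Engelking–Karłowicz family on the pairs `(s, F)` of a set `s` with fewer than `μ` elements
and a collection `F` of fewer than `μ` such sets: the member attached to `X` consists of
the pairs for which `F` contains the trace of `X` on `s`. -/
def traceFamily (μ : Cardinal.{u}) (X : Set α) :
    Set ({s : Set α // #s < μ} × {F : Set {s : Set α // #s < μ} // #F < μ}) :=
  {p | smallTrace X p.1 ∈ p.2.1}

theorem exists_separating_set_mk_lt (hμ : ℵ₀ ≤ μ) {d e : Set (Set α)} (hde : Disjoint d e)
    (hd : #d < μ) (he : #e < μ) :
    ∃ s : Set α, #s < μ ∧ ∀ X ∈ d, ∀ Z ∈ e, X ∩ s ≠ Z ∩ s := by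
  have hdiff (p : d × e) : ∃ a, ¬ (a ∈ p.1.1 ↔ a ∈ p.2.1) := by
    by_contra! h
    exact hde.ne_of_mem p.1.2 p.2.2 (Set.ext h)
  choose sep hsep using hdiff
  refine ⟨range sep, mk_range_le.trans_lt ?_, fun X hX Z hZ h => ?_⟩
  · simpa using mul_lt_of_lt hμ hd he
  · apply hsep (⟨X, hX⟩, ⟨Z, hZ⟩)
    simpa using Set.ext_iff.1 h (sep (⟨X, hX⟩, ⟨Z, hZ⟩))

theorem isIndependentFamily_traceFamily (α : Type u) (hμ : ℵ₀ ≤ μ) :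
    IsIndependentFamily μ (traceFamily (α := α) μ) := by
  intro d e hde hd he
  obtain ⟨s, hs, hsep⟩ := exists_separating_set_mk_lt hμ hde hd he
  refine ⟨(⟨s, hs⟩, ⟨(smallTrace · ⟨s, hs⟩) '' d, mk_image_le.trans_lt hd⟩),
    fun X hX => mem_image_of_mem _ hX, ?_⟩
  rintro Z hZ ⟨X, hX, htrace⟩
  exact hsep X hX Z hZ (congrArg Subtype.val htrace)

theorem exists_isIndependentFamily_of_powerlt_eq [Infinite α] (hμ : ℵ₀ ≤ μ)
    (hpow : #α ^< μ = #α) : ∃ B : Set α → Set α, IsIndependentFamily μ B := by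
  have hμ₁ : 1 < μ := one_lt_aleph0.trans_le hμ
  have hsets := mk_subsets_lt_eq hμ₁ hpow
  have : Infinite {s : Set α // #s < μ} := infinite_iff.2 (hsets ▸ aleph0_le_mk α)
  have hcollections := mk_subsets_lt_eq hμ₁ (hsets.symm ▸ hpow)
  have hpairs :
      #α = #({s : Set α // #s < μ} × {F : Set {s : Set α // #s < μ} // #F < μ}) := by
    rw [mk_prod, lift_id, lift_id, hcollections, hsets, mul_eq_self (aleph0_le_mk α)]
  obtain ⟨e⟩ := Cardinal.eq.1 hpairs
  exact ⟨_, (isIndependentFamily_traceFamily α hμ).preimage e.surjective⟩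

end TraceFamily

theorem stmt9_general {μ : Cardinal.{u}} (hμ : ℵ₀ ≤ μ) (Y : Type u) [Infinite Y]
    (hpow : #Y ^< μ = #Y) :
    ∃ A : Set (Set Y), #A = 2 ^ #Y ∧ (∃ K ⊆ A, #K = μ ∧ ⋂₀ K = ∅) ∧
      ∀ D E : Set (Set Y), D ⊆ A → E ⊆ A → Disjoint D E → #D < μ → #E < μ →
        ¬ ⋂₀ D ⊆ ⋃₀ E := by
  have hμ₁ : 1 < μ := one_lt_aleph0.trans_le hμ
  have hμY : μ ≤ #Y := by
    simpa only [hpow] using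
      le_powerlt_of_one_lt (μ := μ) (one_lt_aleph0.trans_le (aleph0_le_mk Y))
  obtain ⟨B, hB⟩ := exists_isIndependentFamily_of_powerlt_eq hμ hpow
  obtain ⟨M, hM⟩ : ∃ M : Set (Set Y), #M = μ :=
    le_mk_iff_exists_set.1 (hμY.trans (by simpa using (cantor #Y).le))
  have hMne : M.Nonempty :=
    nonempty_coe_sort.1 (mk_ne_zero_iff.1 (hM ▸ (zero_lt_one.trans hμ₁).ne'))
  have hC := hB.diff_biInter hμ hM.ge
  refine ⟨range fun i => B i \ ⋂ j ∈ M, B j, ?_, ⟨_, image_subset_range _ M, ?_, ?_⟩, ?_⟩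
  · rw [mk_range_eq _ (hC.injective hμ₁), mk_set]
  · rw [mk_image_eq (hC.injective hμ₁), hM]
  · rw [sInter_image, biInter_diff_biInter_eq_empty B hMne]
  · intro D E hD hE hDE
    exact hC.not_sInter_subset_sUnion hμ₁ hD hE hDE

/-- Let `μ` be an infinite cardinal and `Y` an infinite set of cardinality `κ` with
`κ ^< μ = κ`.  Then there is a family `A` of subsets of `Y` with `|A| = 2 ^ κ` which has
a subfamily `K` of cardinality `μ` with `⋂ K = ∅`, and such that whenever `D, E` are
disjoint nonempty subfamilies of `A` of cardinality smaller than `μ`, the intersection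
`⋂ D` is not contained in the union `⋃ E`. -/
theorem stmt9 (μ κ : Cardinal) (hμ : ℵ₀ ≤ μ) (Y : Type) (hY : #Y = κ) (hκ : ℵ₀ ≤ κ)
    (hpow : κ ^< μ = κ) :
    ∃ A : Set (Set Y), #A = (2 : Cardinal) ^ κ ∧
      (∃ K ⊆ A, #K = μ ∧ ⋂₀ K = ∅) ∧
      ∀ D E : Set (Set Y), D ⊆ A → E ⊆ A → Disjoint D E →
        D.Nonempty → E.Nonempty → #D < μ → #E < μ → ¬ ⋂₀ D ⊆ ⋃₀ E := by
  subst hY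
  have : Infinite Y := infinite_iff.2 hκ
  obtain ⟨A, hA, hK, hsep⟩ := stmt9_general hμ Y hpow
  exact ⟨A, hA, hK, fun D E hD hE hDE _ _ => hsep D E hD hE hDE⟩
end

section
/- Every partition of the closed unit interval [0,1] into at least two nonempty closed sets is uncountable; that is, if P is a family of pairwise disjoint nonempty closed subsets of [0,1] whose union is [0,1] and |P| ≥ 2, then P is uncountable. -/
open Cardinal Set

/-!
Assign to each point the member of the partition containing it: this is a function with closed
fibers, and if the partition is countable, Baire's theorem applies to it. On the closed set `F` of
points near which the function is not constant, some fiber would have an interior point relative to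
`F`, so around some `x ∈ F` every point of `F` lies in the fiber of `x`. Any other fiber meeting a
small connected neighborhood of `x` is relatively clopen there, hence contains `x`, which is absurd;
so the function is constant near `x` after all. Hence `F` is empty, and connectedness makes the
function constant.
-/

open Filter Topology

variable {X ι : Type*} [TopologicalSpace X] {f : X → ι}

theorem baireSpace_of_isClosed [LocallyCompactSpace X] [R1Space X] {F : Set X} (hF : IsClosed F) :
    BaireSpace F :=
  have := hF.isClosedEmbedding_subtypeVal.locallyCompactSpace
  inferInstance

theorem locallyConnectedSpace_Icc {α : Type*} [LinearOrder α] [TopologicalSpace α]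
    [OrderTopology α] [LocallyConnectedSpace α] {a b : α} (h : a ≤ b) :
    LocallyConnectedSpace (Icc a b) :=
  (isQuotientMap_projIcc (h := h)).isCoinducing.locallyConnectedSpace

theorem preconnected_subset_of_inter_subset_interior {s C : Set X} (hs : IsPreconnected s)
    (hC : IsClosed C) (hne : (s ∩ C).Nonempty) (hsub : s ∩ C ⊆ interior C) : s ⊆ C := by
  have hclosure : closure (interior C) ∩ s ⊆ interior C := fun _ hx =>
    hsub ⟨hx.2, closure_minimal interior_subset hC hx.1⟩
  have hne' : (s ∩ interior C).Nonempty := hne.mono fun _ hx => ⟨hx.1, hsub hx⟩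
  exact (hs.subset_of_closure_inter_subset isOpen_interior hne' hclosure).trans interior_subset

theorem exists_eventually_eq_of_isClosed_fiber [BaireSpace X] [Nonempty X] [Countable ι]
    (hf : ∀ i, IsClosed (f ⁻¹' {i})) : ∃ x, ∀ᶠ y in 𝓝 x, f y = f x := by
  have hcover : ⋃ i, f ⁻¹' {i} = Set.univ := iUnion_eq_univ_iff.2 fun x => ⟨f x, rfl⟩
  obtain ⟨i, x, hx⟩ := nonempty_interior_of_iUnion_of_closed hf hcover
  have hxi : x ∈ f ⁻¹' {i} := interior_subset hx
  obtain rfl : f x = i := hxi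
  exact ⟨x, mem_interior_iff_mem_nhds.1 hx⟩

/-- The set of points near which `f` is not constant. It is the obstruction to `f` being locally
constant, and the closed subspace to which Baire's theorem is applied. -/
def nonconstancySet (f : X → ι) : Set X :=
  {x | ¬∀ᶠ y in 𝓝 x, f y = f x}

theorem notMem_nonconstancySet {x : X} : x ∉ nonconstancySet f ↔ ∀ᶠ y in 𝓝 x, f y = f x :=
  not_not

theorem isClosed_nonconstancySet : IsClosed (nonconstancySet f) := by
  refine isOpen_compl_iff.1 (isOpen_iff_mem_nhds.2 fun x hx => ?_)
  replace hx : ∀ᶠ y in 𝓝 x, f y = f x := notMem_nonconstancySet.1 hx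
  filter_upwards [hx.eventually_nhds, hx] with y hy hyx
  exact notMem_nonconstancySet.2 (hyx ▸ hy)

theorem notMem_nonconstancySet_of_eventually_nhdsWithin [LocallyConnectedSpace X]
    (hf : ∀ i, IsClosed (f ⁻¹' {i})) {x : X} (hx : ∀ᶠ y in 𝓝[nonconstancySet f] x, f y = f x) :
    x ∉ nonconstancySet f := by
  obtain ⟨W, ⟨hWopen, hxW, hWconn⟩, hW⟩ :=
    (LocallyConnectedSpace.open_connected_basis x).mem_iff.1 (eventually_nhdsWithin_iff.1 hx)
  rw [notMem_nonconstancySet]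
  filter_upwards [hWopen.mem_nhds hxW] with y hyW
  by_contra hyx
  have hint : W ∩ f ⁻¹' {f y} ⊆ interior (f ⁻¹' {f y}) := by
    rintro z ⟨hzW, hzy : f z = f y⟩
    have hz : z ∉ nonconstancySet f := fun hz => hyx (hzy.symm.trans (hW hzW hz))
    exact mem_interior_iff_mem_nhds.2 (hzy ▸ notMem_nonconstancySet.1 hz)
  have hWy : W ⊆ f ⁻¹' {f y} :=
    preconnected_subset_of_inter_subset_interior hWconn.isPreconnected (hf (f y)) ⟨y, hyW, rfl⟩ hint
  exact hyx (hWy hxW).symm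

theorem isLocallyConstant_of_isClosed_fiber [LocallyConnectedSpace X] [Countable ι]
    (hX : ∀ F : Set X, IsClosed F → BaireSpace F) (hf : ∀ i, IsClosed (f ⁻¹' {i})) :
    IsLocallyConstant f := by
  suffices hempty : nonconstancySet f = ∅ from (IsLocallyConstant.iff_eventually_eq f).2 fun x =>
    notMem_nonconstancySet.1 (hempty ▸ notMem_empty x)
  by_contra! hne
  have : Nonempty (nonconstancySet f) := hne.to_subtype
  have : BaireSpace (nonconstancySet f) := hX _ isClosed_nonconstancySet
  obtain ⟨x, hx⟩ := exists_eventually_eq_of_isClosed_fiber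
    (f := fun x : nonconstancySet f => f x) fun i => (hf i).preimage continuous_subtype_val
  rw [eventually_nhds_subtype_iff _ x (f · = f x)] at hx
  exact notMem_nonconstancySet_of_eventually_nhdsWithin hf hx x.2

theorem subsingleton_of_indexedPartition_isClosed [PreconnectedSpace X] [LocallyConnectedSpace X]
    [Countable ι] (hX : ∀ F : Set X, IsClosed F → BaireSpace F) {s : ι → Set X}
    (hs : IndexedPartition s) (hclosed : ∀ i, IsClosed (s i)) : Subsingleton ι := by
  have hfiber (i : ι) : hs.index ⁻¹' {i} = s i := (hs.eq i).symm
  have hindex : IsLocallyConstant hs.index :=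
    isLocallyConstant_of_isClosed_fiber hX fun i => hfiber i ▸ hclosed i
  refine ⟨fun i j => ?_⟩
  rw [← hs.index_some i, ← hs.index_some j]
  exact hindex.apply_eq_of_preconnectedSpace _ _

theorem stmt19_general [PreconnectedSpace X] [LocallyConnectedSpace X]
    (hX : ∀ F : Set X, IsClosed F → BaireSpace F) (P : Set (Set X))
    (hne : ∀ A ∈ P, A.Nonempty)
    (hclosed : ∀ A ∈ P, IsClosed A)
    (hdisj : P.PairwiseDisjoint id)
    (hcover : ⋃₀ P = Set.univ)
    (htwo : 2 ≤ #P) :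
    ℵ₀ < #P := by
  by_contra! hcount
  have : Countable P := mk_le_aleph0_iff.1 hcount
  have : Nontrivial P := one_lt_iff_nontrivial.1 (Cardinal.one_lt_two.trans_le htwo)
  let hP : IndexedPartition ((↑) : P → Set X) :=
    .mk' _ hdisj.subtype (fun A => hne A A.2) fun x =>
      have ⟨A, hA, hxA⟩ := sUnion_eq_univ_iff.1 hcover x
      ⟨⟨A, hA⟩, hxA⟩
  exact not_subsingleton P (subsingleton_of_indexedPartition_isClosed hX hP fun A => hclosed A A.2)

/-- Every partition of the closed unit interval `[0,1]` into at least two nonempty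
closed sets is uncountable: if `P` is a family of pairwise disjoint nonempty closed
subsets of `[0,1]` whose union is all of `[0,1]` and `P` has at least two members,
then `|P| > ℵ₀`. -/
theorem stmt19 (P : Set (Set unitInterval))
    (hne : ∀ A ∈ P, A.Nonempty)
    (hclosed : ∀ A ∈ P, IsClosed A)
    (hdisj : P.PairwiseDisjoint id)
    (hcover : ⋃₀ P = Set.univ)
    (htwo : 2 ≤ #P) :
    ℵ₀ < #P := by
  have : LocallyConnectedSpace unitInterval := locallyConnectedSpace_Icc zero_le_one
  exact stmt19_general (fun _ => baireSpace_of_isClosed) P hne hclosed hdisj hcover htwo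
end
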